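/- For every θ ∈ Θ_M° and every x ∈ ℝ, the stable density is strictly positive: f(x;θ) > 0. -/

import Mathlib

open MeasureTheory Filter

noncomputable section

def ThetaInt : Set (Fin 4 → ℝ) :=
  {θ | 0 < θ 1 ∧ θ 2 ∈ Set.Ioo (0:ℝ) 2 ∧ θ 3 ∈ Set.Ioo (-1:ℝ) 1}

/-- Cumulant (log characteristic function) of the continuous (M₀) parameterization,
with `θ = (μ, σ, α, β)`. -/
def psiM (θ : Fin 4 → ℝ) (t : ℝ) : ℂ :=
  if θ 2 = 1 then
    ((-(|θ 1 * t|) : ℝ) : ℂ)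
      - Complex.I * (((2 * θ 3 / Real.pi) * (θ 1 * t) * Real.log |θ 1 * t| : ℝ) : ℂ)
      + Complex.I * ((θ 0 * t : ℝ) : ℂ)
  else
    ((-(|θ 1 * t| ^ (θ 2)) : ℝ) : ℂ) *
        (1 + Complex.I * ((θ 3 * Real.sign t * Real.tan (Real.pi * θ 2 / 2)
            * (|θ 1 * t| ^ (1 - θ 2) - 1) : ℝ) : ℂ))
      + Complex.I * ((θ 0 * t : ℝ) : ℂ)

/-- Characteristic function of the (M₀) parameterization. -/
def phiM (θ : Fin 4 → ℝ) (t : ℝ) : ℂ := Complex.exp (psiM θ t)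

/-- Stable density in the (M₀) parameterization, via Fourier inversion. -/
def fM (θ : Fin 4 → ℝ) (x : ℝ) : ℝ :=
  (1 / (2 * Real.pi)) *
    (∫ t : ℝ, Complex.exp (-Complex.I * (t : ℂ) * (x : ℂ)) * phiM θ t).re

/-- Partial derivative of the density in parameter `i`. -/
def fP (i : Fin 4) (θ : Fin 4 → ℝ) (x : ℝ) : ℝ :=
  deriv (fun s => fM (Function.update θ i s) x) (θ i)

/-- Second partial derivative of the density in parameters `i`, `j`. -/
def fPP (i j : Fin 4) (θ : Fin 4 → ℝ) (x : ℝ) : ℝ :=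
  deriv (fun s => fP i (Function.update θ j s) x) (θ j)

/-- Derivative of the density in `x`. -/
def fX (θ : Fin 4 → ℝ) (x : ℝ) : ℝ := deriv (fun y => fM θ y) x

/-- Mixed derivative `∂²f/∂x∂θᵢ`. -/
def fPX (i : Fin 4) (θ : Fin 4 → ℝ) (x : ℝ) : ℝ := deriv (fun y => fP i θ y) x

/-- Score functions. -/
def ellP (i : Fin 4) (θ : Fin 4 → ℝ) (x : ℝ) : ℝ := fP i θ x / fM θ x

/-- Derivative of the score in `x`. -/
def ellPX (i : Fin 4) (θ : Fin 4 → ℝ) (x : ℝ) : ℝ := deriv (fun y => ellP i θ y) x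

/-- Derivative of the score `ℓ_{θᵢ}` in the parameter `θⱼ`. -/
def ellPP (i j : Fin 4) (θ : Fin 4 → ℝ) (x : ℝ) : ℝ :=
  deriv (fun s => ellP i (Function.update θ j s) x) (θ j)

/-- `h = O(r)` as `|x| → ∞`. -/
def IsBigOAtInfty (h r : ℝ → ℝ) : Prop :=
  ∃ c > 0, ∃ M > 0, ∀ x : ℝ, M ≤ |x| → |h x| ≤ c * r x


end

def IsCF (φ : ℝ → ℂ) : Prop :=
  ∃ μ : Measure ℝ, IsProbabilityMeasure μ ∧ ∀ t, charFun μ t = φ t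

lemma IsCF.congr {φ χ : ℝ → ℂ} (h : IsCF φ) (e : ∀ t, φ t = χ t) : IsCF χ := by
  obtain ⟨μ, hμ, h⟩ := h
  exact ⟨μ, hμ, fun t => (h t).trans (e t)⟩

lemma IsCF.mul {φ χ : ℝ → ℂ} (h : IsCF φ) (h' : IsCF χ) : IsCF (fun t => φ t * χ t) := by
  obtain ⟨μ, hμ, h⟩ := h
  obtain ⟨ν, hν, h'⟩ := h'
  exact ⟨Measure.conv μ ν, inferInstance, fun t => by rw [charFun_conv, h, h']⟩

lemma IsCF.drift (b : ℝ) : IsCF (fun t => Complex.exp (Complex.I * ((b * t : ℝ) : ℂ))) := by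
  refine ⟨Measure.dirac b, inferInstance, fun t => ?_⟩
  rw [charFun_dirac]
  congr 1
  simp
  ring

lemma IsCF.one : IsCF (fun _ => 1) := by
  refine (IsCF.drift 0).congr fun t => by simp

lemma IsCF.pow {φ : ℝ → ℂ} (h : IsCF φ) (n : ℕ) : IsCF (fun t => φ t ^ n) := by
  induction n with
  | zero => simpa using IsCF.one
  | succ n ih => exact (ih.mul h).congr fun t => (pow_succ _ _).symm

lemma IsCF.neg {φ : ℝ → ℂ} (h : IsCF φ) : IsCF (fun t => φ (-t)) := by
  obtain ⟨μ, hμ, h⟩ := h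
  refine ⟨μ.map (fun x => (-1) * x), Measure.isProbabilityMeasure_map (by fun_prop), fun t => ?_⟩
  rw [charFun_map_mul, h]
  simp

lemma IsCF.limit {φ : ℕ → ℝ → ℂ} {f : ℝ → ℂ} (h : ∀ n, IsCF (φ n))
    (hf : ContinuousAt f 0) (hl : ∀ t, Tendsto (fun n => φ n t) atTop (nhds (f t))) :
    IsCF f := by
  choose μ hμ hφ using h
  have hl' : ∀ t, Tendsto (fun n => charFun (μ n) t) atTop (nhds (f t)) := by
    intro t; simpa only [hφ] using hl t
  have ht := isTightMeasureSet_of_tendsto_charFun hf hl'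
  let P : ℕ → ProbabilityMeasure ℝ := fun n => ⟨μ n, hμ n⟩
  have hc : IsCompact (closure (Set.range P)) := by
    apply isCompact_closure_of_isTightMeasureSet
    convert ht using 1
    ext ν
    constructor
    · rintro ⟨_, ⟨n, rfl⟩, rfl⟩; exact ⟨n, rfl⟩
    · rintro ⟨n, rfl⟩; exact ⟨P n, ⟨n, rfl⟩, rfl⟩
  let U : Ultrafilter ℕ := Ultrafilter.of atTop
  obtain ⟨ν, -, hν⟩ := hc.ultrafilter_le_nhds (U.map P)
    (by
      rw [Filter.le_principal_iff]
      exact Filter.mem_map.2 (Filter.univ_mem' fun n => subset_closure ⟨n, rfl⟩))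
  have hν' : Tendsto P U (nhds ν) := hν
  refine ⟨ν, inferInstance, fun t => ?_⟩
  rw [ProbabilityMeasure.tendsto_iff_forall_integral_rclike_tendsto ℂ] at hν'
  have h1 := hν' (BoundedContinuousFunction.innerProbChar t)
  simp_rw [← charFun_eq_integral_innerProbChar] at h1
  exact tendsto_nhds_unique h1 ((hl' t).mono_left (Ultrafilter.of_le atTop))

lemma IsCF.compoundPoisson (ν : Measure ℝ) [IsFiniteMeasure ν] :
    IsCF (fun t => Complex.exp (charFun ν t - charFun ν 0)) := by
  set L : ℝ := ν.real Set.univ with hL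
  have hL0 : 0 ≤ L := measureReal_nonneg
  obtain ⟨N, hN⟩ := exists_nat_gt L
  have hM : ∀ n : ℕ, IsCF (fun t => (1 + ((charFun ν t - charFun ν 0) / ((n + N + 1 : ℕ) : ℂ)))) := by
    intro n
    set m : ℝ := ((n + N + 1 : ℕ) : ℝ) with hm
    have hm0 : 0 < m := by positivity
    have hLm : L ≤ m := by rw [hm]; push_cast; linarith [(Nat.cast_nonneg n : (0:ℝ) ≤ n)]
    have hq : 0 ≤ 1 - L / m := by
      rw [sub_nonneg, div_le_one hm0]; exact hLm
    refine ⟨ENNReal.ofReal (1 - L / m) • Measure.dirac 0 + ENNReal.ofReal (1 / m) • ν, ⟨?_⟩, fun t => ?_⟩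
    · have : ν Set.univ = ENNReal.ofReal L := by simp [hL]
      simp only [Measure.coe_add, Measure.coe_smul, Pi.add_apply, Pi.smul_apply, measure_univ, smul_eq_mul, mul_one, this]
      rw [← ENNReal.ofReal_mul (by positivity), ← ENNReal.ofReal_add hq (by positivity)]
      simp; field_simp; ring
    · simp only [charFun_apply_real]
      have hi : ∀ ρ : Measure ℝ, IsFiniteMeasure ρ → Integrable (fun x : ℝ => Complex.exp (t * x * Complex.I)) ρ := by
        intro ρ hρ
        refine Integrable.of_bound (by fun_prop) 1 (Filter.Eventually.of_forall fun x => ?_)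
        rw [show (t * x * Complex.I : ℂ) = ((t * x : ℝ) : ℂ) * Complex.I by push_cast; ring, Complex.norm_exp_ofReal_mul_I]
      rw [integral_add_measure ((hi _ inferInstance).smul_measure (by simp)) ((hi _ inferInstance).smul_measure (by simp)), integral_smul_measure, integral_smul_measure, integral_dirac,
        ENNReal.toReal_ofReal hq, ENNReal.toReal_ofReal (by positivity)]
      have : ((n + N + 1 : ℕ) : ℂ) = (m : ℂ) := by simp [hm]
      rw [this]
      have hmc : (m : ℂ) ≠ 0 := by exact_mod_cast hm0.ne'
      simp
      rw [← hL]
      generalize (∫ (x : ℝ), Complex.exp (↑t * ↑x * Complex.I) ∂ν) = J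
      field_simp
      ring
  refine IsCF.limit (fun n => (hM n).pow (n + N + 1)) ?_ fun t => ?_
  · have : Continuous (charFun ν) := continuous_charFun
    fun_prop
  · have := Complex.tendsto_one_add_div_pow_exp (charFun ν t - charFun ν 0)
    have h2 := this.comp (tendsto_add_atTop_nat (N + 1))
    simpa [Function.comp_def, ← add_assoc] using h2

lemma norm_exp_sub_one_sub_le (u : ℝ) :
    ‖Complex.exp (u * Complex.I) - 1 - u * Complex.I‖ ≤ u ^ 2 := by
  have hD : ∀ s : ℝ, HasDerivAt (fun s : ℝ => Complex.exp (s * Complex.I) - 1 - s * Complex.I)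
      ((Complex.exp (s * Complex.I) - 1) * Complex.I) s := by
    intro s
    have h1 : HasDerivAt (fun s : ℝ => (s : ℂ) * Complex.I) Complex.I s := by
      simpa using (Complex.ofRealCLM.hasDerivAt (x := s)).mul_const Complex.I
    exact ((h1.cexp.sub_const 1).fun_sub h1).congr_deriv (by ring)
  have hb : ∀ s ∈ Metric.closedBall (0:ℝ) |u|, ‖(Complex.exp (s * Complex.I) - 1) * Complex.I‖ ≤ |u| := by
    intro s hs
    rw [norm_mul, Complex.norm_I, mul_one, mul_comm]
    refine (Real.norm_exp_I_mul_ofReal_sub_one_le).trans ?_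
    simpa using hs
  have := (convex_closedBall (0:ℝ) |u|).norm_image_sub_le_of_norm_hasDerivWithin_le
    (fun s _ => (hD s).hasDerivWithinAt) hb (x := 0) (y := u) (by simp) (by simp)
  simpa [sq, abs_mul_abs_self] using this

/-- the Lévy integrand -/
noncomputable def levyK (t x : ℝ) : ℂ := Complex.exp ((t * x : ℝ) * Complex.I) - 1 - ((t * x : ℝ) : ℂ) * Complex.I

lemma norm_levyK_le (t x : ℝ) : ‖levyK t x‖ ≤ t ^ 2 * x ^ 2 := by
  rw [← mul_pow]; exact norm_exp_sub_one_sub_le _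

lemma continuous_levyK (t : ℝ) : Continuous (levyK t) := by
  unfold levyK; fun_prop

lemma integrable_levyK {ν : Measure ℝ} (h : Integrable (fun x : ℝ => x ^ 2) ν) (t : ℝ) :
    Integrable (levyK t) ν := by
  refine (h.const_mul (t ^ 2)).mono' (continuous_levyK t).aestronglyMeasurable ?_
  exact Filter.Eventually.of_forall fun x => norm_levyK_le t x

lemma IsCF.levy (ν : Measure ℝ) (h : Integrable (fun x : ℝ => x ^ 2) ν) :
    IsCF (fun t => Complex.exp (∫ x, levyK t x ∂ν)) := by
  let S : ℕ → Set ℝ := fun n => {x | (1 : ℝ) / (n + 1) ≤ |x|}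
  have hS : ∀ n, MeasurableSet (S n) := fun n => measurableSet_le measurable_const (by fun_prop)
  have hfin : ∀ n, IsFiniteMeasure (ν.restrict (S n)) := by
    intro n
    refine ⟨?_⟩
    rw [Measure.restrict_apply_univ]
    have hp : (0:ℝ) < (1 / ((n:ℝ) + 1)) ^ 2 := by positivity
    refine (measure_mono ?_).trans_lt (h.measure_norm_ge_lt_top hp)
    intro x hx
    have hx' : (1 : ℝ) / (n + 1) ≤ |x| := hx
    simp only [Set.mem_ofPred_eq, norm_pow, Real.norm_eq_abs]
    gcongr
  have hx : ∀ n, Integrable (fun x : ℝ => x) (ν.restrict (S n)) := by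
    intro n
    have := hfin n
    refine ((h.restrict (s := S n)).add (integrable_const 1)).mono' (by fun_prop) ?_
    refine Filter.Eventually.of_forall fun x => ?_
    simp only [Pi.add_apply, Real.norm_eq_abs]
    nlinarith [sq_abs x, sq_nonneg (|x| - 1), abs_nonneg x]
  have key : ∀ n, IsCF (fun t => Complex.exp (∫ x in S n, levyK t x ∂ν)) := by
    intro n
    have := hfin n
    refine ((IsCF.compoundPoisson (ν.restrict (S n))).mul
      (IsCF.drift (-∫ x in S n, x ∂ν))).congr fun t => ?_
    rw [← Complex.exp_add]
    congr 1
    unfold levyK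
    have hi : Integrable (fun x : ℝ => Complex.exp ((t * x : ℝ) * Complex.I)) (ν.restrict (S n)) := by
      refine Integrable.of_bound (by fun_prop) 1 (Filter.Eventually.of_forall fun x => ?_)
      rw [Complex.norm_exp_ofReal_mul_I]
    have hi2 : Integrable (fun x : ℝ => ((t * x : ℝ) : ℂ) * Complex.I) (ν.restrict (S n)) :=
      (((hx n).const_mul t).ofReal).mul_const _
    have hi1 : Integrable (fun x : ℝ => Complex.exp ((t * x : ℝ) * Complex.I) - 1) (ν.restrict (S n)) :=
      hi.sub (integrable_const _)
    rw [integral_sub hi1 hi2, integral_sub hi (integrable_const _),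
      integral_mul_const]
    have e1 : ∫ x in S n, ((t * x : ℝ) : ℂ) ∂ν = ((t * ∫ x in S n, x ∂ν : ℝ) : ℂ) := by
      rw [integral_complex_ofReal, integral_const_mul]
    rw [e1]
    simp only [charFun_apply_real]
    push_cast
    simp
    ring
  refine IsCF.limit key ?_ fun t => ?_
  · have hb : ∀ t, ‖∫ x, levyK t x ∂ν‖ ≤ t ^ 2 * ∫ x, x ^ 2 ∂ν := by
      intro t
      rw [← integral_const_mul]
      exact norm_integral_le_of_norm_le (h.const_mul _)
        (Filter.Eventually.of_forall fun x => norm_levyK_le t x)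
    have h0 : (∫ x, levyK 0 x ∂ν) = 0 := by simp [levyK]
    have : ContinuousAt (fun t => ∫ x, levyK t x ∂ν) 0 := by
      rw [ContinuousAt, h0]
      refine squeeze_zero_norm hb ?_
      have : Continuous fun t : ℝ => t ^ 2 * ∫ x, x ^ 2 ∂ν := by fun_prop
      simpa using this.tendsto 0
    exact this.cexp
  · refine (Complex.continuous_exp.tendsto _).comp ?_
    simp_rw [← integral_indicator (hS _)]
    refine tendsto_integral_of_dominated_convergence (fun x => t ^ 2 * x ^ 2)
      (fun n => ((continuous_levyK t).aestronglyMeasurable).indicator (hS n)) (h.const_mul _) ?_ ?_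
    · intro n
      refine Filter.Eventually.of_forall fun x => ?_
      exact (norm_indicator_le_norm_self _ _).trans (norm_levyK_le t x)
    · refine Filter.Eventually.of_forall fun x => ?_
      by_cases hx0 : x = 0
      · subst hx0
        have : levyK t 0 = 0 := by simp [levyK]
        have h2 : ∀ n, (S n).indicator (levyK t) 0 = 0 := by
          intro n; simp [Set.indicator, this]
        simp only [h2, this]; exact tendsto_const_nhds
      · obtain ⟨N, hN⟩ := exists_nat_one_div_lt (abs_pos.2 hx0)
        refine tendsto_const_nhds.congr' ?_
        filter_upwards [eventually_ge_atTop N] with n hn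
        rw [Set.indicator_of_mem]
        refine le_trans ?_ hN.le
        have : (N : ℝ) ≤ n := by exact_mod_cast hn
        gcongr

lemma integrable_gauss_real {s : ℝ} (hs : 0 < s) :
    Integrable (fun t : ℝ => Real.exp (-(s * t ^ 2 / 2))) := by
  have := integrable_exp_neg_mul_sq (b := s / 2) (by positivity)
  refine this.congr (Filter.Eventually.of_forall fun t => ?_)
  simp only; congr 1; ring

lemma norm_exp_neg_I (t x : ℝ) : ‖Complex.exp (-Complex.I * (t : ℂ) * (x : ℂ))‖ = 1 := by
  rw [show (-Complex.I * (t : ℂ) * (x : ℂ)) = ((-(t * x) : ℝ) : ℂ) * Complex.I by push_cast; ring,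
    Complex.norm_exp_ofReal_mul_I]

lemma gauss_pos (μ : Measure ℝ) [IsProbabilityMeasure μ] {s : ℝ} (hs : 0 < s) (x : ℝ) :
    0 < (∫ t : ℝ, Complex.exp (-Complex.I * (t : ℂ) * (x : ℂ)) *
      (charFun μ t * (Real.exp (-(s * t ^ 2 / 2)) : ℂ))).re := by
  have e1 : ∀ t : ℝ, Complex.exp (-Complex.I * (t : ℂ) * (x : ℂ)) *
      (charFun μ t * (Real.exp (-(s * t ^ 2 / 2)) : ℂ)) =
      ∫ y, Complex.exp (((t * (y - x) : ℝ) : ℂ) * Complex.I) * (Real.exp (-(s * t ^ 2 / 2)) : ℂ) ∂μ := by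
    intro t
    rw [integral_mul_const, charFun_apply_real, ← mul_assoc, ← integral_const_mul]
    congr 2
    ext y
    rw [← Complex.exp_add]
    congr 1; push_cast; ring
  simp_rw [e1]
  rw [integral_integral_swap]
  · have e2 : ∀ y : ℝ, (∫ t : ℝ, Complex.exp (((t * (y - x) : ℝ) : ℂ) * Complex.I) * (Real.exp (-(s * t ^ 2 / 2)) : ℂ))
        = ((Real.sqrt (2 * Real.pi / s) * Real.exp (-(y - x) ^ 2 / (2 * s)) : ℝ) : ℂ) := by
      intro y
      have hb : 0 < ((s / 2 : ℝ) : ℂ).re := by simp; positivity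
      have := fourierIntegral_gaussian hb ((y - x : ℝ) : ℂ)
      rw [show (fun t : ℝ => Complex.exp (((t * (y - x) : ℝ) : ℂ) * Complex.I) * (Real.exp (-(s * t ^ 2 / 2)) : ℂ))
        = fun t : ℝ => Complex.exp (Complex.I * ((y - x : ℝ) : ℂ) * t) * Complex.exp (-((s / 2 : ℝ) : ℂ) * t ^ 2) from ?_, this]
      · rw [Real.sqrt_eq_rpow]
        push_cast
        rw [Complex.ofReal_cpow (by positivity)]
        push_cast
        congr 2
        · field_simp
        · congr 1; ring
      · ext t
        push_cast
        congr 2 <;> ring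
    simp_rw [e2]
    rw [integral_complex_ofReal, Complex.ofReal_re]
    have hb : ∀ y : ℝ, ‖Real.sqrt (2 * Real.pi / s) * Real.exp (-(y - x) ^ 2 / (2 * s))‖ ≤ Real.sqrt (2 * Real.pi / s) := by
      intro y
      rw [Real.norm_of_nonneg (by positivity)]
      refine mul_le_of_le_one_right (by positivity) ?_
      rw [Real.exp_le_one_iff]
      have : 0 ≤ (y - x) ^ 2 / (2 * s) := by positivity
      rw [neg_div]; linarith
    have hi : Integrable (fun y : ℝ => Real.sqrt (2 * Real.pi / s) * Real.exp (-(y - x) ^ 2 / (2 * s))) μ :=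
      Integrable.of_bound (by fun_prop) _ (Filter.Eventually.of_forall hb)
    rw [integral_pos_iff_support_of_nonneg (fun y => by positivity) hi]
    have : Function.support (fun y : ℝ => Real.sqrt (2 * Real.pi / s) * Real.exp (-(y - x) ^ 2 / (2 * s))) = Set.univ := by
      ext y; simp only [Function.mem_support, Set.mem_univ, iff_true]; positivity
    rw [this]; simp
  · have h0 : Integrable (fun p : ℝ × ℝ => Real.exp (-(s * p.1 ^ 2 / 2))) (volume.prod μ) := by
      have := (integrable_gauss_real hs).mul_prod (integrable_const (1:ℝ) (μ := μ))
      simpa using this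
    refine h0.mono' ?_ (Filter.Eventually.of_forall fun p => ?_)
    · exact Continuous.aestronglyMeasurable (by unfold Function.uncurry; fun_prop)
    · simp only [Function.uncurry]
      rw [norm_mul, Complex.norm_exp_ofReal_mul_I, one_mul, Complex.norm_real, Real.norm_of_nonneg (by positivity)]

lemma pos_of_factor {φ φ₁ : ℝ → ℂ} (h1 : IsCF φ₁) {κ : ℝ} (hκ : 0 < κ)
    (hφ : ∀ t, φ t = φ₁ t * Complex.exp ((κ * (Real.exp (-(t ^ 2 / 2)) - 1) : ℝ) : ℂ))
    (hint : Integrable φ) (x : ℝ) :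
    0 < (∫ t : ℝ, Complex.exp (-Complex.I * (t : ℂ) * (x : ℂ)) * φ t).re := by
  obtain ⟨μ, hμ, h1⟩ := h1
  have hcont : Continuous (charFun μ) := continuous_charFun
  let J : ℝ → ℂ := fun s => ∫ t : ℝ, Complex.exp (-Complex.I * (t : ℂ) * (x : ℂ)) *
      (charFun μ t * (Real.exp (-(s * t ^ 2 / 2)) : ℂ))
  let N : ℝ → ℂ := fun ε => ∫ t : ℝ, Complex.exp (-Complex.I * (t : ℂ) * (x : ℂ)) *
      (φ t * (Real.exp (-(ε * t ^ 2 / 2)) : ℂ))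
  have hJ : ∀ s, 0 < s → 0 < (J s).re := fun s hs => gauss_pos μ hs x
  have nrm : ∀ s t : ℝ, ‖Complex.exp (-Complex.I * (t : ℂ) * (x : ℂ)) *
      (charFun μ t * (Real.exp (-(s * t ^ 2 / 2)) : ℂ))‖ ≤ Real.exp (-(s * t ^ 2 / 2)) := by
    intro s t
    rw [norm_mul, norm_mul, norm_exp_neg_I, one_mul, Complex.norm_real, Real.norm_of_nonneg (by positivity)]
    exact mul_le_of_le_one_left (by positivity) (norm_charFun_le_one t)
  -- the series
  have hser : ∀ ε, 0 < ε → κ * (J (1 + ε)).re ≤ Real.exp κ * (N ε).re := by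
    intro ε hε
    let F : ℕ → ℝ → ℂ := fun k t => ((κ ^ k / k.factorial : ℝ) : ℂ) *
      (Complex.exp (-Complex.I * (t : ℂ) * (x : ℂ)) *
        (charFun μ t * (Real.exp (-((k + ε) * t ^ 2 / 2)) : ℂ)))
    have hFn : ∀ k t, ‖F k t‖ ≤ (κ ^ k / k.factorial) * Real.exp (-(ε * t ^ 2 / 2)) := by
      intro k t
      simp only [F]
      rw [norm_mul, Complex.norm_real, Real.norm_of_nonneg (by positivity)]
      gcongr
      refine (nrm _ t).trans ?_
      gcongr
      linarith [(Nat.cast_nonneg k : (0:ℝ) ≤ k)]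
    have hFi : ∀ k, Integrable (F k) := by
      intro k
      refine ((integrable_gauss_real hε).const_mul _).mono' ?_ (Filter.Eventually.of_forall (hFn k))
      exact Continuous.aestronglyMeasurable (by simp only [F]; fun_prop)
    have hsum : Summable fun k => ∫ t, ‖F k t‖ := by
      have hs : Summable fun k : ℕ => (κ ^ k / k.factorial) * ∫ t : ℝ, Real.exp (-(ε * t ^ 2 / 2)) :=
        (Real.summable_pow_div_factorial κ).mul_right _
      refine hs.of_nonneg_of_le (fun k => integral_nonneg fun t => norm_nonneg _) fun k => ?_
      rw [← integral_const_mul]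
      exact integral_mono (hFi k).norm ((integrable_gauss_real hε).const_mul _) (hFn k)
    have hs := hasSum_integral_of_summable_integral_norm hFi hsum
    have e3 : ∀ t, ∑' k, F k t = (Real.exp κ : ℂ) * (Complex.exp (-Complex.I * (t : ℂ) * (x : ℂ)) *
      (φ t * (Real.exp (-(ε * t ^ 2 / 2)) : ℂ))) := by
      intro t
      have hexp : HasSum (fun k : ℕ => ((κ * Real.exp (-(t ^ 2 / 2)) : ℝ)) ^ k / (k.factorial : ℝ)) (Real.exp (κ * Real.exp (-(t ^ 2 / 2)))) := by
        rw [Real.exp_eq_exp_ℝ]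
        exact NormedSpace.expSeries_div_hasSum_exp _
      have hc : HasSum (fun k : ℕ => (((κ * Real.exp (-(t ^ 2 / 2)) : ℝ) ^ k / (k.factorial : ℝ) : ℝ) : ℂ)) ((Real.exp (κ * Real.exp (-(t ^ 2 / 2))) : ℝ) : ℂ) := by
        exact_mod_cast hexp
      have h4 := hc.mul_right (Complex.exp (-Complex.I * (t : ℂ) * (x : ℂ)) *
        (charFun μ t * (Real.exp (-(ε * t ^ 2 / 2)) : ℂ)))
      have h5 : ∀ k, F k t = (((κ * Real.exp (-(t ^ 2 / 2)) : ℝ) ^ k / (k.factorial : ℝ) : ℝ) : ℂ) * (Complex.exp (-Complex.I * (t : ℂ) * (x : ℂ)) *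
        (charFun μ t * (Real.exp (-(ε * t ^ 2 / 2)) : ℂ))) := by
        intro k
        simp only [F]
        have : Real.exp (-((k + ε) * t ^ 2 / 2)) = Real.exp (-(t ^ 2 / 2)) ^ k * Real.exp (-(ε * t ^ 2 / 2)) := by
          rw [← Real.exp_nat_mul, ← Real.exp_add]; congr 1; ring
        rw [this, mul_pow]
        push_cast
        ring
      simp_rw [h5]
      rw [h4.tsum_eq, hφ, h1]
      have h6 : Real.exp (κ * Real.exp (-(t ^ 2 / 2))) = Real.exp κ * Real.exp (κ * (Real.exp (-(t ^ 2 / 2)) - 1)) := by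
        rw [← Real.exp_add]; congr 1; ring
      rw [h6, ← Complex.ofReal_exp (κ * (Real.exp (-(t ^ 2 / 2)) - 1))]
      push_cast
      ring
    simp_rw [e3] at hs
    rw [integral_const_mul] at hs
    have e4 : ∀ k : ℕ, ∫ t, F k t = ((κ ^ k / k.factorial : ℝ) : ℂ) * J (k + ε) := by
      intro k; simp only [F, J]; rw [integral_const_mul]
    simp_rw [e4] at hs
    have hre := Complex.hasSum_re hs
    simp only [Complex.re_ofReal_mul] at hre
    have := le_hasSum hre 1 (fun k _ => mul_nonneg (by positivity) (hJ _ (by positivity)).le)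
    simp only [pow_one, Nat.factorial_one, Nat.cast_one, div_one, one_mul] at this
    exact this
  -- limits
  have hseq : Tendsto (fun n : ℕ => (1:ℝ) / ((n:ℝ) + 1)) atTop (nhds 0) := tendsto_one_div_add_atTop_nhds_zero_nat
  have lJ : Tendsto (fun n : ℕ => J (1 + 1 / ((n:ℝ) + 1))) atTop (nhds (J 1)) := by
    refine tendsto_integral_of_dominated_convergence (fun t => Real.exp (-(1 * t ^ 2 / 2))) ?_ (integrable_gauss_real one_pos) ?_ ?_
    · intro n; exact Continuous.aestronglyMeasurable (by fun_prop)
    · intro n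
      refine Filter.Eventually.of_forall fun t => (nrm _ t).trans ?_
      gcongr
      have : (0:ℝ) < 1 / ((n:ℝ) + 1) := by positivity
      linarith
    · refine Filter.Eventually.of_forall fun t => ?_
      have hc : Continuous fun s : ℝ => Complex.exp (-Complex.I * (t : ℂ) * (x : ℂ)) *
        (charFun μ t * (Real.exp (-((1 + s) * t ^ 2 / 2)) : ℂ)) := by fun_prop
      have := (hc.tendsto 0).comp hseq
      simpa [Function.comp_def] using this
  have lN : Tendsto (fun n : ℕ => N (1 / ((n:ℝ) + 1))) atTop (nhds (∫ t : ℝ, Complex.exp (-Complex.I * (t : ℂ) * (x : ℂ)) * φ t)) := by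
    refine tendsto_integral_of_dominated_convergence (fun t => ‖φ t‖) ?_ hint.norm ?_ ?_
    · intro n
      refine AEStronglyMeasurable.mul (Continuous.aestronglyMeasurable (by fun_prop)) (hint.1.mul (Continuous.aestronglyMeasurable (by fun_prop)))
    · intro n
      refine Filter.Eventually.of_forall fun t => ?_
      rw [norm_mul, norm_mul, norm_exp_neg_I, one_mul, Complex.norm_real, Real.norm_of_nonneg (by positivity)]
      refine mul_le_of_le_one_right (norm_nonneg _) ?_
      rw [Real.exp_le_one_iff]
      have : (0:ℝ) ≤ 1 / ((n:ℝ) + 1) * t ^ 2 / 2 := by positivity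
      linarith
    · refine Filter.Eventually.of_forall fun t => ?_
      have hc : Continuous fun s : ℝ => Complex.exp (-Complex.I * (t : ℂ) * (x : ℂ)) *
        (φ t * (Real.exp (-(s * t ^ 2 / 2)) : ℂ)) := by fun_prop
      have := (hc.tendsto 0).comp hseq
      simpa [Function.comp_def] using this
  have hle := le_of_tendsto_of_tendsto'
    (((Complex.continuous_re.tendsto _).comp lJ).const_mul κ)
    (((Complex.continuous_re.tendsto _).comp lN).const_mul (Real.exp κ))
    (fun n => hser _ (by positivity))
  have hp := hJ 1 one_pos
  by_contra hneg
  push Not at hneg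
  have a1 : 0 < κ * (J 1).re := mul_pos hκ hp
  have a2 := mul_nonpos_of_nonneg_of_nonpos (Real.exp_pos κ).le hneg
  linarith

lemma const_of_hasDerivAt {f : ℝ → ℂ} (h : ∀ t, HasDerivAt f 0 t) (t : ℝ) : f t = f 0 :=
  is_const_of_deriv_eq_zero (fun s => (h s).differentiableAt) (fun s => (h s).deriv) t 0

lemma integrable_gammaW {b ε : ℝ} (hb : 0 < b) (hε : 0 < ε) :
    IntegrableOn (fun x : ℝ => x ^ (b - 1) * Real.exp (-(ε * x))) (Set.Ioi 0) := by
  have := integrableOn_rpow_mul_exp_neg_mul_rpow (p := 1) (s := b - 1) (b := ε) (by linarith) one_pos hε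
  simpa using this

lemma norm_exp_I' (t x : ℝ) : ‖Complex.exp ((t * x : ℝ) * Complex.I)‖ = 1 :=
  Complex.norm_exp_ofReal_mul_I _

lemma hasDerivAt_expI (t x : ℝ) :
    HasDerivAt (fun t : ℝ => Complex.exp ((t * x : ℝ) * Complex.I))
      (Complex.exp ((t * x : ℝ) * Complex.I) * (x * Complex.I)) t := by
  have h1 : HasDerivAt (fun t : ℝ => (t * x : ℝ)) x t := by
    simpa using (hasDerivAt_id t).mul_const x
  have h2 := (h1.ofReal_comp.mul_const Complex.I).cexp
  exact h2

lemma integrable_mul_of_bdd {w : ℝ → ℝ} {k : ℝ → ℂ}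
    (hw : IntegrableOn w (Set.Ioi 0)) (hk : Continuous k) (hb : ∀ x, ‖k x‖ ≤ 1) :
    IntegrableOn (fun x => (w x : ℂ) * k x) (Set.Ioi 0) := by
  refine hw.norm.mono' (hw.ofReal.1.mul hk.aestronglyMeasurable) (Filter.Eventually.of_forall fun x => ?_)
  rw [norm_mul, Complex.norm_real]
  exact mul_le_of_le_one_right (norm_nonneg _) (hb x)

lemma gamma_complex {a ε : ℝ} (ha : 0 < a) (hε : 0 < ε) (t : ℝ) :
    ∫ x in Set.Ioi (0:ℝ), ((x ^ (a - 1) * Real.exp (-(ε * x)) : ℝ) : ℂ) * Complex.exp ((t * x : ℝ) * Complex.I)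
      = (Real.Gamma a : ℂ) * (ε - Complex.I * t) ^ (-a : ℂ) := by
  let G : ℝ → ℝ → ℂ := fun b t => ∫ x in Set.Ioi (0:ℝ),
    ((x ^ (b - 1) * Real.exp (-(ε * x)) : ℝ) : ℂ) * Complex.exp ((t * x : ℝ) * Complex.I)
  have hGi : ∀ b : ℝ, 0 < b → ∀ t : ℝ, IntegrableOn (fun x : ℝ => ((x ^ (b - 1) * Real.exp (-(ε * x)) : ℝ) : ℂ) * Complex.exp ((t * x : ℝ) * Complex.I)) (Set.Ioi 0) := by
    intro b hb t
    exact integrable_mul_of_bdd (integrable_gammaW hb hε) (by fun_prop) (fun x => (norm_exp_I' t x).le)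
  have hsp : ∀ t : ℝ, (ε - Complex.I * t : ℂ) ∈ Complex.slitPlane := by
    intro t; left; simpa using hε
  have hne : ∀ t : ℝ, (ε - Complex.I * t : ℂ) ≠ 0 := fun t => Complex.slitPlane_ne_zero (hsp t)
  have hderiv : ∀ t : ℝ, HasDerivAt (G a) (Complex.I * G (a + 1) t) t := by
    intro t
    have := (hasDerivAt_integral_of_dominated_loc_of_deriv_le (μ := volume.restrict (Set.Ioi (0:ℝ)))
      (F := fun t x => ((x ^ (a - 1) * Real.exp (-(ε * x)) : ℝ) : ℂ) * Complex.exp ((t * x : ℝ) * Complex.I))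
      (F' := fun t x => ((x ^ (a - 1) * Real.exp (-(ε * x)) : ℝ) : ℂ) * (Complex.exp ((t * x : ℝ) * Complex.I) * (x * Complex.I)))
      (bound := fun x => x ^ (a + 1 - 1) * Real.exp (-(ε * x)))
      (x₀ := t) (s := Set.univ) Filter.univ_mem (Filter.Eventually.of_forall fun s => (hGi a ha s).1) (hGi a ha t) ?_ ?_
      (integrable_gammaW (by linarith) hε) ?_).2
    · refine this.congr_deriv (Eq.symm ?_)
      change Complex.I * (∫ x in Set.Ioi (0:ℝ), _) = _
      rw [← integral_const_mul]
      refine setIntegral_congr_fun measurableSet_Ioi fun x hx => ?_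
      have hx : 0 < x := hx
      rw [show a + 1 - 1 = a - 1 + 1 by ring, Real.rpow_add_one hx.ne']
      push_cast; ring
    · refine AEStronglyMeasurable.mul (integrable_gammaW ha hε).ofReal.1 (Continuous.aestronglyMeasurable (by fun_prop))
    · filter_upwards [ae_restrict_mem measurableSet_Ioi] with x hx s _
      have hx : 0 < x := hx
      have n1 : ‖((x ^ (a - 1) * Real.exp (-(ε * x)) : ℝ) : ℂ)‖ = x ^ (a - 1) * Real.exp (-(ε * x)) := by
        rw [Complex.norm_real, Real.norm_of_nonneg (by positivity)]
      have n2 : ‖(x : ℂ) * Complex.I‖ = x := by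
        rw [norm_mul, Complex.norm_I, mul_one, Complex.norm_real, Real.norm_of_nonneg hx.le]
      rw [norm_mul, n1, norm_mul, norm_exp_I', n2, one_mul, show a + 1 - 1 = a - 1 + 1 by ring, Real.rpow_add_one hx.ne']
      apply le_of_eq; ring
    · exact Filter.Eventually.of_forall fun x s _ => (hasDerivAt_expI s x).const_mul _
  have hibp : ∀ t : ℝ, (ε - Complex.I * t : ℂ) * G (a + 1) t = a * G a t := by
    intro t
    let f : ℝ → ℂ := fun x => ((x ^ a * Real.exp (-(ε * x)) : ℝ) : ℂ) * Complex.exp ((t * x : ℝ) * Complex.I)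
    have hd : ∀ x ∈ Set.Ioi (0:ℝ), HasDerivAt f (a * (((x ^ (a - 1) * Real.exp (-(ε * x)) : ℝ) : ℂ) * Complex.exp ((t * x : ℝ) * Complex.I))
      - (ε - Complex.I * t : ℂ) * (((x ^ (a + 1 - 1) * Real.exp (-(ε * x)) : ℝ) : ℂ) * Complex.exp ((t * x : ℝ) * Complex.I))) x := by
      intro x hx
      have hx : 0 < x := hx
      have h1 : HasDerivAt (fun x : ℝ => x ^ a * Real.exp (-(ε * x)))
          (a * x ^ (a - 1) * Real.exp (-(ε * x)) + x ^ a * (Real.exp (-(ε * x)) * (-ε))) x := by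
        have e1 : HasDerivAt (fun x : ℝ => -(ε * x)) (-ε) x := by
          exact ((hasDerivAt_id x).const_mul ε).fun_neg.congr_deriv (by ring)
        exact (Real.hasDerivAt_rpow_const (Or.inl hx.ne')).mul e1.exp
      have h2 : HasDerivAt (fun x : ℝ => Complex.exp ((t * x : ℝ) * Complex.I))
          (Complex.exp ((t * x : ℝ) * Complex.I) * (t * Complex.I)) x := by
        have := hasDerivAt_expI x t
        simpa only [mul_comm t] using this
      refine (h1.ofReal_comp.mul h2).congr_deriv ?_
      rw [show a + 1 - 1 = a by ring]
      push_cast; ring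
    have hint1 := (hGi a ha t).const_mul (a : ℂ)
    have hint2 := (hGi (a + 1) (by linarith) t).const_mul (ε - Complex.I * t : ℂ)
    have hlim : Tendsto f atTop (nhds 0) := by
      refine squeeze_zero_norm' ?_ (tendsto_rpow_mul_exp_neg_mul_atTop_nhds_zero a ε hε)
      filter_upwards [eventually_gt_atTop 0] with x hx
      simp only [f]
      rw [norm_mul, norm_exp_I', mul_one, Complex.norm_real, Real.norm_of_nonneg (by positivity), neg_mul]
    have hc : Continuous f := by
      have : Continuous fun x : ℝ => x ^ a := Real.continuous_rpow_const ha.le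
      simp only [f]; fun_prop
    have := integral_Ioi_of_hasDerivAt_of_tendsto hc.continuousWithinAt hd (hint1.sub hint2) hlim
    rw [integral_sub hint1 hint2, integral_const_mul, integral_const_mul] at this
    have f0 : f 0 = 0 := by simp [f, Real.zero_rpow ha.ne']
    rw [f0, sub_zero] at this
    exact (sub_eq_zero.1 this).symm
  have hlin : ∀ t : ℝ, HasDerivAt (fun t : ℝ => (ε - Complex.I * t : ℂ)) (-Complex.I) t := by
    intro t
    simpa using ((Complex.ofRealCLM.hasDerivAt (x := t)).const_mul Complex.I).const_sub (ε : ℂ)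
  have hpow : ∀ t : ℝ, HasDerivAt (fun t : ℝ => (ε - Complex.I * t : ℂ) ^ (a : ℂ)) (a * (ε - Complex.I * t : ℂ) ^ (a - 1 : ℂ) * (-Complex.I)) t := by
    intro t
    have h := (Complex.hasStrictDerivAt_cpow_const (c := (a : ℂ)) (hsp t)).hasDerivAt
    exact h.comp t (hlin t)
  have hprod : ∀ t : ℝ, HasDerivAt (fun t : ℝ => (ε - Complex.I * t : ℂ) ^ (a : ℂ) * G a t) 0 t := by
    intro t
    refine ((hpow t).mul (hderiv t)).congr_deriv ?_
    have e : (ε - Complex.I * t : ℂ) ^ (a : ℂ) = (ε - Complex.I * t : ℂ) ^ (a - 1 : ℂ) * (ε - Complex.I * t : ℂ) := by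
      rw [Complex.cpow_sub _ _ (hne t), Complex.cpow_one, div_mul_cancel₀ _ (hne t)]
    rw [e]
    linear_combination (Complex.I * (ε - Complex.I * t : ℂ) ^ (a - 1 : ℂ)) * hibp t
  have hfin := const_of_hasDerivAt hprod t
  have h0 : G a 0 = (((1 / ε) ^ a * Real.Gamma a : ℝ) : ℂ) := by
    rw [← Real.integral_rpow_mul_exp_neg_mul_Ioi ha hε, ← integral_complex_ofReal]
    simp [G]
  rw [h0] at hfin
  have h3 : ((ε : ℂ) - Complex.I * ((0:ℝ) : ℂ)) ^ (a : ℂ) * (((1 / ε) ^ a * Real.Gamma a : ℝ) : ℂ) = Real.Gamma a := by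
    simp only [Complex.ofReal_zero, mul_zero, sub_zero]
    rw [← Complex.ofReal_cpow hε.le, ← Complex.ofReal_mul, ← mul_assoc, ← Real.mul_rpow hε.le (by positivity), mul_one_div_cancel hε.ne', Real.one_rpow, one_mul]
  rw [h3] at hfin
  change G a t = _
  rw [Complex.cpow_neg, ← hfin]
  field_simp [Complex.cpow_ne_zero_iff, hne t]

lemma levy_eval {α ε : ℝ} (h0 : 0 < α) (h2 : α < 2) (hε : 0 < ε) {Φ Φ' : ℂ → ℂ}
    (hΦ : ∀ z : ℂ, 0 < z.re → HasDerivAt Φ (Φ' z) z)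
    (hΦ' : ∀ z : ℂ, 0 < z.re → HasDerivAt Φ' (z ^ ((α - 2 : ℝ) : ℂ)) z) (t : ℝ) :
    ∫ x in Set.Ioi (0:ℝ), ((x ^ (-1 - α) * Real.exp (-(ε * x)) : ℝ) : ℂ) * levyK t x
      = (Real.Gamma (2 - α) : ℂ) * (Φ (ε - Complex.I * t) - Φ ε + Complex.I * t * Φ' ε) := by
  let w : ℝ → ℝ := fun x => x ^ (-1 - α) * Real.exp (-(ε * x))
  have hwm : Measurable w := by fun_prop
  have hw0 : ∀ x, 0 < x → 0 ≤ w x := fun x hx => by positivity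
  have hw2 : ∀ x, 0 < x → x ^ 2 * w x = x ^ ((2 - α) - 1) * Real.exp (-(ε * x)) := by
    intro x hx
    simp only [w]
    rw [← mul_assoc, ← Real.rpow_natCast x 2, ← Real.rpow_add hx]
    congr 2; push_cast; ring
  have hWi : IntegrableOn (fun x => x ^ 2 * w x) (Set.Ioi 0) :=
    (integrable_gammaW (b := 2 - α) (by linarith) hε).congr_fun (fun x hx => (hw2 x hx).symm) measurableSet_Ioi
  have hnw : ∀ x, 0 < x → ‖((w x : ℝ) : ℂ)‖ = w x := fun x hx => by
    rw [Complex.norm_real, Real.norm_of_nonneg (hw0 x hx)]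
  have hn2 : ∀ x : ℝ, 0 < x → ‖(x : ℂ) * Complex.I‖ = x := fun x hx => by
    rw [norm_mul, Complex.norm_I, mul_one, Complex.norm_real, Real.norm_of_nonneg hx.le]
  have hn3 : ∀ s x : ℝ, 0 < x → ‖Complex.exp ((s * x : ℝ) * Complex.I) - 1‖ ≤ |s| * x := fun s x hx => by
    rw [mul_comm]
    refine (Real.norm_exp_I_mul_ofReal_sub_one_le).trans ?_
    rw [Real.norm_eq_abs, abs_mul, abs_of_pos hx]
  have hi0 : ∀ s : ℝ, IntegrableOn (fun x => ((w x : ℝ) : ℂ) * levyK s x) (Set.Ioi 0) := by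
    intro s
    refine (hWi.const_mul (s ^ 2)).mono' ?_ ?_
    · exact (Complex.measurable_ofReal.comp hwm).aestronglyMeasurable.mul (continuous_levyK s).aestronglyMeasurable
    · filter_upwards [ae_restrict_mem measurableSet_Ioi] with x hx
      rw [norm_mul, hnw x hx]
      nlinarith [norm_levyK_le s x, hw0 x hx]
  have hi1 : ∀ s : ℝ, IntegrableOn (fun x => ((w x : ℝ) : ℂ) * ((Complex.exp ((s * x : ℝ) * Complex.I) - 1) * (x * Complex.I))) (Set.Ioi 0) := by
    intro s
    refine (hWi.const_mul |s|).mono' ?_ ?_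
    · exact (Complex.measurable_ofReal.comp hwm).aestronglyMeasurable.mul (Continuous.aestronglyMeasurable (by fun_prop))
    · filter_upwards [ae_restrict_mem measurableSet_Ioi] with x hx
      rw [norm_mul, hnw x hx, norm_mul, hn2 x hx]
      calc _ ≤ w x * (|s| * x * x) := by
            have := hn3 s x hx
            have := hw0 x hx
            have : 0 < x := hx
            gcongr
        _ = _ := by ring
  have hA1 : ∀ t : ℝ, HasDerivAt (fun t => ∫ x in Set.Ioi (0:ℝ), ((w x : ℝ) : ℂ) * levyK t x)
      (∫ x in Set.Ioi (0:ℝ), ((w x : ℝ) : ℂ) * ((Complex.exp ((t * x : ℝ) * Complex.I) - 1) * (x * Complex.I))) t := by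
    intro t
    refine (hasDerivAt_integral_of_dominated_loc_of_deriv_le (μ := volume.restrict (Set.Ioi (0:ℝ)))
      (F := fun t x => ((w x : ℝ) : ℂ) * levyK t x)
      (F' := fun t x => ((w x : ℝ) : ℂ) * ((Complex.exp ((t * x : ℝ) * Complex.I) - 1) * (x * Complex.I)))
      (bound := fun x => (|t| + 1) * (x ^ 2 * w x))
      (x₀ := t) (s := Metric.ball t 1) (Metric.ball_mem_nhds t one_pos) (Filter.Eventually.of_forall fun s => (hi0 s).1) (hi0 t) (hi1 t).1 ?_
      (hWi.const_mul _) ?_).2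
    · filter_upwards [ae_restrict_mem measurableSet_Ioi] with x hx s hs
      rw [norm_mul, hnw x hx, norm_mul, hn2 x hx]
      have hs' : |s| ≤ |t| + 1 := by
        have h1 : |s - t| < 1 := by simpa [Real.dist_eq] using hs
        have := abs_sub_abs_le_abs_sub s t
        linarith
      calc _ ≤ w x * ((|t| + 1) * x * x) := by
            have := hn3 s x hx
            have := hw0 x hx
            have h3 : 0 < x := hx
            have : |s| * x ≤ (|t| + 1) * x := by gcongr
            gcongr
            linarith
        _ = _ := by ring
    · refine Filter.Eventually.of_forall fun x s _ => HasDerivAt.const_mul _ ?_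
      have h1 : HasDerivAt (fun t : ℝ => ((t * x : ℝ) : ℂ) * Complex.I) (x * Complex.I) s := by
        have h1 : HasDerivAt (fun t : ℝ => (t * x : ℝ)) x s := by
          simpa using (hasDerivAt_id s).mul_const x
        exact h1.ofReal_comp.mul_const Complex.I
      exact (((hasDerivAt_expI s x).sub_const 1).fun_sub h1).congr_deriv (by ring)
  have hA2 : ∀ t : ℝ, HasDerivAt (fun t : ℝ => ∫ x in Set.Ioi (0:ℝ), ((w x : ℝ) : ℂ) * ((Complex.exp ((t * x : ℝ) * Complex.I) - 1) * (x * Complex.I)))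
      (-((Real.Gamma (2 - α) : ℂ) * (ε - Complex.I * t) ^ ((α - 2 : ℝ) : ℂ))) t := by
    intro t
    refine HasDerivAt.congr_deriv (hasDerivAt_integral_of_dominated_loc_of_deriv_le (μ := volume.restrict (Set.Ioi (0:ℝ)))
      (F := fun (t : ℝ) x => ((w x : ℝ) : ℂ) * ((Complex.exp ((t * x : ℝ) * Complex.I) - 1) * (x * Complex.I)))
      (F' := fun (t : ℝ) x => ((w x : ℝ) : ℂ) * ((Complex.exp ((t * x : ℝ) * Complex.I) * (x * Complex.I)) * (x * Complex.I)))
      (bound := fun x => (x ^ 2 * w x))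
      (x₀ := t) (s := Set.univ) Filter.univ_mem (Filter.Eventually.of_forall fun s => (hi1 s).1) (hi1 t) ?_ ?_
      hWi ?_).2 ?_
    · exact (Complex.measurable_ofReal.comp hwm).aestronglyMeasurable.mul (Continuous.aestronglyMeasurable (by fun_prop))
    · filter_upwards [ae_restrict_mem measurableSet_Ioi] with x hx s hs
      rw [norm_mul, hnw x hx, norm_mul, norm_mul, hn2 x hx, norm_exp_I']
      apply le_of_eq; ring
    · refine Filter.Eventually.of_forall fun x s _ => HasDerivAt.const_mul _ ?_
      exact ((hasDerivAt_expI s x).sub_const 1).mul_const _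
    · have := gamma_complex (a := 2 - α) (by linarith) hε t
      rw [show ((α - 2 : ℝ) : ℂ) = -((2 - α : ℝ) : ℂ) by push_cast; ring, ← this, ← integral_neg]
      refine setIntegral_congr_fun measurableSet_Ioi fun x hx => ?_
      change _ = -(((x ^ ((2 - α) - 1) * Real.exp (-(ε * x)) : ℝ) : ℂ) * Complex.exp ((t * x : ℝ) * Complex.I))
      rw [← hw2 x hx]
      push_cast
      linear_combination ((w x : ℝ) : ℂ) * Complex.exp (t * x * Complex.I) * x ^ 2 * Complex.I_sq
  have hlin : ∀ t : ℝ, HasDerivAt (fun t : ℝ => (ε - Complex.I * t : ℂ)) (-Complex.I) t := by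
    intro t
    simpa using ((Complex.ofRealCLM.hasDerivAt (x := t)).const_mul Complex.I).const_sub (ε : ℂ)
  have hre : ∀ t : ℝ, 0 < (ε - Complex.I * t : ℂ).re := by intro t; simpa using hε
  set Γ : ℂ := (Real.Gamma (2 - α) : ℂ)
  have hB2 : ∀ t : ℝ, HasDerivAt (fun t : ℝ => Γ * (-Complex.I) * Φ' (ε - Complex.I * t)) (-(Γ * (ε - Complex.I * t) ^ ((α - 2 : ℝ) : ℂ))) t := by
    intro t
    have := ((hΦ' _ (hre t)).comp t (hlin t)).const_mul (Γ * (-Complex.I))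
    refine this.congr_deriv ?_
    linear_combination Γ * (ε - Complex.I * t) ^ ((α - 2 : ℝ) : ℂ) * Complex.I_sq
  have hB1 : ∀ t : ℝ, HasDerivAt (fun t : ℝ => Γ * Φ (ε - Complex.I * t)) (Γ * (-Complex.I) * Φ' (ε - Complex.I * t)) t := by
    intro t
    have := ((hΦ _ (hre t)).comp t (hlin t)).const_mul Γ
    exact this.congr_deriv (by ring)
  have hid : ∀ t : ℝ, HasDerivAt (fun t : ℝ => (t : ℂ)) 1 t := fun t => by
    exact (hasDerivAt_id t).ofReal_comp.congr_deriv (by simp)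
  have c1 : ∀ t : ℝ, (∫ x in Set.Ioi (0:ℝ), ((w x : ℝ) : ℂ) * ((Complex.exp ((t * x : ℝ) * Complex.I) - 1) * (x * Complex.I)))
      = Γ * (-Complex.I) * Φ' (ε - Complex.I * t) - Γ * (-Complex.I) * Φ' ε := by
    intro t
    have := const_of_hasDerivAt (fun t => ((hA2 t).fun_sub (hB2 t)).congr_deriv (sub_self _)) t
    simp only [zero_mul, Complex.ofReal_zero, Complex.exp_zero, sub_self, mul_zero, integral_zero, sub_zero, zero_sub] at this
    linear_combination this
  have := const_of_hasDerivAt (fun t => (((hA1 t).fun_sub (hB1 t)).fun_sub ((hid t).const_mul (Γ * Complex.I * Φ' ε))).congr_deriv (by rw [c1]; ring)) t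
  have hk : ∀ x, levyK 0 x = 0 := fun x => by simp [levyK]
  simp only [hk, Complex.ofReal_zero, mul_zero, integral_zero, sub_zero, zero_sub] at this
  change (∫ x in Set.Ioi (0:ℝ), ((w x : ℝ) : ℂ) * levyK t x) = _
  linear_combination this

lemma IsCF.levy_density {h : ℝ → ℝ} (hm : Measurable h) (h0 : ∀ x, 0 < x → 0 ≤ h x)
    (hi : IntegrableOn (fun x => x ^ 2 * h x) (Set.Ioi 0)) :
    IsCF (fun t => Complex.exp (∫ x in Set.Ioi (0:ℝ), ((h x : ℝ) : ℂ) * levyK t x)) := by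
  have hm' : Measurable fun x => ENNReal.ofReal (h x) := hm.ennreal_ofReal
  have hlt : ∀ᵐ x ∂(volume.restrict (Set.Ioi (0:ℝ))), ENNReal.ofReal (h x) < ⊤ :=
    Filter.Eventually.of_forall fun x => ENNReal.ofReal_lt_top
  have := IsCF.levy ((volume.restrict (Set.Ioi (0:ℝ))).withDensity (fun x => ENNReal.ofReal (h x))) ?_
  · refine this.congr fun t => ?_
    rw [integral_withDensity_eq_integral_toReal_smul hm' hlt]
    congr 1
    refine setIntegral_congr_fun measurableSet_Ioi fun x hx => ?_
    rw [ENNReal.toReal_ofReal (h0 x hx), Complex.real_smul]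
  · rw [integrable_withDensity_iff_integrable_smul' hm' hlt]
    refine hi.congr_fun (fun x hx => ?_) measurableSet_Ioi
    simp only
    rw [ENNReal.toReal_ofReal (h0 x hx), smul_eq_mul, mul_comm]

/-- Gaussian density -/
noncomputable def gD (x : ℝ) : ℝ := ProbabilityTheory.gaussianPDFReal 0 1 x

lemma gD_meas : Measurable gD := ProbabilityTheory.measurable_gaussianPDFReal 0 1

lemma gD_nonneg (x : ℝ) : 0 ≤ gD x := ProbabilityTheory.gaussianPDFReal_nonneg 0 1 x

lemma gD_le (x : ℝ) : gD x ≤ Real.exp (-(x ^ 2 / 2)) := by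
  unfold gD ProbabilityTheory.gaussianPDFReal
  have h1 : (1:ℝ) ≤ Real.sqrt (2 * Real.pi * (1:NNReal)) := by
    rw [Real.one_le_sqrt]; have := Real.pi_gt_three; simp; linarith
  have h2 : (Real.sqrt (2 * Real.pi * (1:NNReal)))⁻¹ ≤ 1 := inv_le_one_of_one_le₀ h1
  refine (mul_le_of_le_one_left (Real.exp_pos _).le h2).trans (le_of_eq ?_)
  congr 1; simp; ring

lemma gD_neg (x : ℝ) : gD (-x) = gD x := by
  simp [gD, ProbabilityTheory.gaussianPDFReal]

lemma gauss_sq : Integrable (fun x : ℝ => x ^ 2) (ProbabilityTheory.gaussianReal 0 1) :=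
  (ProbabilityTheory.memLp_id_gaussianReal 2).integrable_sq

lemma gD_sq : Integrable (fun x : ℝ => x ^ 2 * gD x) := by
  have h1 := gauss_sq
  rw [ProbabilityTheory.gaussianReal_of_var_ne_zero 0 one_ne_zero,
    integrable_withDensity_iff_integrable_smul' (ProbabilityTheory.measurable_gaussianPDF 0 1)
      (Filter.Eventually.of_forall fun x => ProbabilityTheory.gaussianPDF_lt_top)] at h1
  refine h1.congr (Filter.Eventually.of_forall fun x => ?_)
  simp only [ProbabilityTheory.toReal_gaussianPDF, smul_eq_mul, gD]
  ring

lemma gD_levyK_int (t : ℝ) : Integrable (fun x => ((gD x : ℝ) : ℂ) * levyK t x) := by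
  refine (gD_sq.const_mul (t ^ 2)).mono' ?_ (Filter.Eventually.of_forall fun x => ?_)
  · exact (Complex.measurable_ofReal.comp gD_meas).aestronglyMeasurable.mul (continuous_levyK t).aestronglyMeasurable
  · rw [norm_mul, Complex.norm_real, Real.norm_of_nonneg (gD_nonneg x)]
    nlinarith [norm_levyK_le t x, gD_nonneg x]

lemma gD_levyK (t : ℝ) : ∫ x, ((gD x : ℝ) : ℂ) * levyK t x = ((Real.exp (-(t ^ 2 / 2)) - 1 : ℝ) : ℂ) := by
  have h := ProbabilityTheory.integral_gaussianReal_eq_integral_smul (μ := 0) (v := 1) one_ne_zero (f := levyK t)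
  simp only [Complex.real_smul] at h
  change _ = ∫ x, ((gD x : ℝ) : ℂ) * levyK t x at h
  rw [← h]
  unfold levyK
  have hx : Integrable (fun x : ℝ => x) (ProbabilityTheory.gaussianReal 0 1) :=
    memLp_one_iff_integrable.1 (ProbabilityTheory.memLp_id_gaussianReal 1)
  have hi : Integrable (fun x : ℝ => Complex.exp ((t * x : ℝ) * Complex.I)) (ProbabilityTheory.gaussianReal 0 1) := by
    refine Integrable.of_bound (by fun_prop) 1 (Filter.Eventually.of_forall fun x => ?_)
    rw [Complex.norm_exp_ofReal_mul_I]
  have hi2 : Integrable (fun x : ℝ => ((t * x : ℝ) : ℂ) * Complex.I) (ProbabilityTheory.gaussianReal 0 1) :=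
    ((hx.const_mul t).ofReal).mul_const _
  have hi1 : Integrable (fun x : ℝ => Complex.exp ((t * x : ℝ) * Complex.I) - 1) (ProbabilityTheory.gaussianReal 0 1) :=
    hi.sub (integrable_const _)
  rw [integral_sub hi1 hi2, integral_sub hi (integrable_const _),
      integral_mul_const, integral_complex_ofReal, integral_const_mul, ProbabilityTheory.integral_id_gaussianReal]
  have := ProbabilityTheory.charFun_gaussianReal (μ := 0) (v := 1) t
  rw [charFun_apply_real] at this
  simp only [Complex.ofReal_mul]
  rw [this]
  simp

lemma gD_halves (t : ℝ) : (∫ x in Set.Ioi (0:ℝ), ((gD x : ℝ) : ℂ) * levyK t x)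
    + (∫ x in Set.Ioi (0:ℝ), ((gD x : ℝ) : ℂ) * levyK (-t) x) = ((Real.exp (-(t ^ 2 / 2)) - 1 : ℝ) : ℂ) := by
  rw [← gD_levyK]
  have e : (∫ x in Set.Ioi (0:ℝ), ((gD x : ℝ) : ℂ) * levyK (-t) x) = ∫ x in Set.Iic (0:ℝ), ((gD x : ℝ) : ℂ) * levyK t x := by
    have := integral_comp_neg_Ioi (0:ℝ) (fun x => ((gD x : ℝ) : ℂ) * levyK t x)
    rw [neg_zero] at this
    rw [← this]
    congr 1; ext x
    rw [gD_neg]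
    simp [levyK]
  rw [e, add_comm]
  exact intervalIntegral.integral_Iic_add_Ioi (gD_levyK_int t).integrableOn (gD_levyK_int t).integrableOn

lemma gD_bound {α ε x : ℝ} (h0 : 0 < α) (h2 : α < 2) (hε : 0 < ε) (hε1 : ε ≤ 1) (hx : 0 < x) :
    gD x ≤ 7 * Real.exp 2 * (x ^ (-1 - α) * Real.exp (-(ε * x))) := by
  have e1 : x ^ (1 + α) ≤ 7 * Real.exp x := by
    have h3 : x ^ (1 + α) ≤ 1 + x ^ 3 := by
      rcases le_total x 1 with h | h
      · have := Real.rpow_le_one hx.le h (by linarith : 0 ≤ 1 + α)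
        have : 0 < x ^ 3 := by positivity
        linarith
      · have : x ^ (1 + α) ≤ x ^ (3:ℝ) := Real.rpow_le_rpow_of_exponent_le h (by linarith)
        rw [show (3:ℝ) = ((3:ℕ):ℝ) by norm_num, Real.rpow_natCast] at this
        linarith
    have h4 := Real.pow_div_factorial_le_exp x hx.le 3
    have h5 : x ^ 3 / 6 ≤ Real.exp x := by simpa [Nat.factorial] using h4
    have h6 : 1 ≤ Real.exp x := Real.one_le_exp hx.le
    linarith
  have e2 : gD x ≤ Real.exp 2 * Real.exp (-(2 * x)) := by
    refine (gD_le x).trans ?_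
    rw [← Real.exp_add]
    gcongr
    nlinarith [sq_nonneg (x - 2)]
  have e3 : Real.exp (-x) ≤ Real.exp (-(ε * x)) := by
    gcongr; nlinarith
  have e4 : x ^ (-1 - α) * x ^ (1 + α) = 1 := by
    rw [← Real.rpow_add hx]; simp
  have e5 : Real.exp (-(2 * x)) = Real.exp (-x) * Real.exp (-x) := by rw [← Real.exp_add]; congr 1; ring
  have e6 : Real.exp x * Real.exp (-x) = 1 := by rw [← Real.exp_add]; simp
  have hp : 0 < x ^ (-1 - α) := by positivity
  calc gD x ≤ Real.exp 2 * Real.exp (-(2 * x)) := e2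
    _ = Real.exp 2 * (x ^ (-1 - α) * x ^ (1 + α)) * (Real.exp (-x) * Real.exp (-x)) := by rw [e4, e5, mul_one]
    _ ≤ Real.exp 2 * (x ^ (-1 - α) * (7 * Real.exp x)) * (Real.exp (-x) * Real.exp (-(ε * x))) := by gcongr
    _ = 7 * Real.exp 2 * (x ^ (-1 - α) * Real.exp (-(ε * x))) * (Real.exp x * Real.exp (-x)) := by ring
    _ = _ := by rw [e6, mul_one]

lemma oneSided {α c κ : ℝ} (h0 : 0 < α) (h2 : α < 2) (hκ0 : 0 ≤ κ)
    (hκ : κ * (7 * Real.exp 2) ≤ c) {Φ Φ' : ℂ → ℂ}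
    (hΦ : ∀ z : ℂ, 0 < z.re → HasDerivAt Φ (Φ' z) z)
    (hΦ' : ∀ z : ℂ, 0 < z.re → HasDerivAt Φ' (z ^ ((α - 2 : ℝ) : ℂ)) z)
    (hr : ∀ ε : ℝ, 0 < ε → (Φ' ε).im = 0) (hcont : ContinuousOn Φ {z | 0 ≤ z.re}) (hz : Φ 0 = 0) :
    IsCF (fun t => Complex.exp (((c * Real.Gamma (2 - α) : ℝ) : ℂ) * Φ (-(Complex.I * t))
      - κ * ∫ x in Set.Ioi (0:ℝ), ((gD x : ℝ) : ℂ) * levyK t x)) := by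
  set J : ℝ → ℂ := fun t => ∫ x in Set.Ioi (0:ℝ), ((gD x : ℝ) : ℂ) * levyK t x with hJ
  set G : ℝ := c * Real.Gamma (2 - α) with hG
  have key : ∀ n : ℕ, IsCF (fun t => Complex.exp ((G : ℂ) * (Φ (((1 / ((n:ℝ) + 1) : ℝ) : ℂ) - Complex.I * t) - Φ ((1 / ((n:ℝ) + 1) : ℝ) : ℂ)) - κ * J t)) := by
    intro n
    set ε : ℝ := 1 / ((n:ℝ) + 1) with hεd
    have hε : 0 < ε := by positivity
    have hε1 : ε ≤ 1 := by
      rw [hεd, div_le_one (by positivity)]; have : (0:ℝ) ≤ n := n.cast_nonneg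
      linarith
    let w : ℝ → ℝ := fun x => x ^ (-1 - α) * Real.exp (-(ε * x))
    have hwm : Measurable w := by fun_prop
    have hw0 : ∀ x, 0 < x → 0 ≤ w x := fun x hx => by positivity
    have hw2 : ∀ x, 0 < x → x ^ 2 * w x = x ^ ((2 - α) - 1) * Real.exp (-(ε * x)) := by
      intro x hx
      simp only [w]
      rw [← mul_assoc, ← Real.rpow_natCast x 2, ← Real.rpow_add hx]
      congr 2; push_cast; ring
    have hWi : IntegrableOn (fun x => x ^ 2 * w x) (Set.Ioi 0) :=
      (integrable_gammaW (b := 2 - α) (by linarith) hε).congr_fun (fun x hx => (hw2 x hx).symm) measurableSet_Ioi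
    have hi0 : ∀ s : ℝ, IntegrableOn (fun x => ((w x : ℝ) : ℂ) * levyK s x) (Set.Ioi 0) := by
      intro s
      refine (hWi.const_mul (s ^ 2)).mono' ?_ ?_
      · exact (Complex.measurable_ofReal.comp hwm).aestronglyMeasurable.mul (continuous_levyK s).aestronglyMeasurable
      · filter_upwards [ae_restrict_mem measurableSet_Ioi] with x hx
        rw [norm_mul, Complex.norm_real, Real.norm_of_nonneg (hw0 x hx)]
        nlinarith [norm_levyK_le s x, hw0 x hx]
    have h1 := IsCF.levy_density (h := fun x => c * w x - κ * gD x)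
      ((hwm.const_mul c).sub (gD_meas.const_mul κ)) (fun x hx => by
        have a1 := gD_bound h0 h2 hε hε1 hx
        have a2 : κ * gD x ≤ κ * (7 * Real.exp 2 * w x) := mul_le_mul_of_nonneg_left a1 hκ0
        have a3 := mul_le_mul_of_nonneg_right hκ (hw0 x hx)
        linarith) (by
        refine ((hWi.const_mul c).sub (gD_sq.integrableOn.const_mul κ)).congr (Filter.Eventually.of_forall fun x => ?_)
        simp only [Pi.sub_apply]; ring)
    refine (h1.mul (IsCF.drift (-(G * (Φ' ε).re)))).congr fun t => ?_
    rw [← Complex.exp_add]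
    congr 1
    have e1 : (∫ x in Set.Ioi (0:ℝ), ((c * w x - κ * gD x : ℝ) : ℂ) * levyK t x)
        = c * (∫ x in Set.Ioi (0:ℝ), ((w x : ℝ) : ℂ) * levyK t x) - κ * J t := by
      rw [hJ, ← integral_const_mul, ← integral_const_mul, ← integral_sub ((hi0 t).const_mul _) ((gD_levyK_int t).integrableOn.const_mul _)]
      congr 1; ext x
      push_cast; ring
    rw [e1, levy_eval h0 h2 hε hΦ hΦ' t]
    have e2 : Φ' ε = (((Φ' ε).re : ℝ) : ℂ) := by
      apply Complex.ext <;> simp [hr ε hε]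
    rw [hG]
    push_cast
    linear_combination (c : ℂ) * (Real.Gamma (2 - α) : ℂ) * Complex.I * t * e2
  have hJ0 : J 0 = 0 := by simp [hJ, levyK]
  have hJc : ContinuousAt J 0 := by
    rw [ContinuousAt, hJ0]
    have hb : ∀ t, ‖J t‖ ≤ t ^ 2 * ∫ x in Set.Ioi (0:ℝ), x ^ 2 * gD x := by
      intro t
      rw [← integral_const_mul]
      refine norm_integral_le_of_norm_le (gD_sq.integrableOn.const_mul _)
        (Filter.Eventually.of_forall fun x => ?_)
      rw [norm_mul, Complex.norm_real, Real.norm_of_nonneg (gD_nonneg x)]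
      nlinarith [norm_levyK_le t x, gD_nonneg x]
    refine squeeze_zero_norm hb ?_
    have : Continuous fun t : ℝ => t ^ 2 * ∫ x in Set.Ioi (0:ℝ), x ^ 2 * gD x := by fun_prop
    simpa using this.tendsto 0
  refine IsCF.limit key ?_ fun t => ?_
  · have hc : Continuous fun t : ℝ => Φ (-(Complex.I * t)) := by
      refine hcont.comp_continuous (by fun_prop) fun t => ?_
      simp
    exact ((hc.continuousAt.const_mul _).sub (hJc.const_mul _)).cexp
  · have hε : Tendsto (fun n : ℕ => ((1 / ((n:ℝ) + 1) : ℝ) : ℂ)) atTop (nhds 0) := by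
      have := tendsto_one_div_add_atTop_nhds_zero_nat (𝕜 := ℝ)
      exact (Complex.continuous_ofReal.tendsto' 0 0 (by simp)).comp this
    have l1 : Tendsto (fun n : ℕ => Φ (((1 / ((n:ℝ) + 1) : ℝ) : ℂ) - Complex.I * t)) atTop (nhds (Φ (-(Complex.I * t)))) := by
      refine (hcont (-(Complex.I * t)) (by simp)).tendsto.comp (tendsto_nhdsWithin_iff.2 ⟨?_, ?_⟩)
      · simpa using hε.sub_const (Complex.I * t)
      · refine Filter.Eventually.of_forall fun n => ?_
        simp only [Set.mem_ofPred_eq, Complex.sub_re, Complex.ofReal_re, Complex.mul_re, Complex.I_re, Complex.I_im, Complex.ofReal_im]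
        have : (0:ℝ) ≤ 1 / ((n:ℝ) + 1) := by positivity
        linarith
    have l2 : Tendsto (fun n : ℕ => Φ ((1 / ((n:ℝ) + 1) : ℝ) : ℂ)) atTop (nhds 0) := by
      rw [← hz]
      refine (hcont 0 (by simp)).tendsto.comp (tendsto_nhdsWithin_iff.2 ⟨hε, ?_⟩)
      refine Filter.Eventually.of_forall fun n => ?_
      simp only [Set.mem_ofPred_eq, Complex.ofReal_re]
      positivity
    have := (((l1.sub l2).const_mul (G : ℂ)).sub_const (κ * J t)).cexp
    simpa using this

lemma twoSided {α cp cm : ℝ} (d : ℝ) (h0 : 0 < α) (h2 : α < 2) (hcp : 0 < cp) (hcm : 0 < cm) {Φ Φ' : ℂ → ℂ}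
    (hΦ : ∀ z : ℂ, 0 < z.re → HasDerivAt Φ (Φ' z) z)
    (hΦ' : ∀ z : ℂ, 0 < z.re → HasDerivAt Φ' (z ^ ((α - 2 : ℝ) : ℂ)) z)
    (hr : ∀ ε : ℝ, 0 < ε → (Φ' ε).im = 0) (hcont : ContinuousOn Φ {z | 0 ≤ z.re}) (hz : Φ 0 = 0) :
    ∃ κ : ℝ, 0 < κ ∧ ∃ φ₁ : ℝ → ℂ, IsCF φ₁ ∧ ∀ t : ℝ,
      Complex.exp ((cp : ℂ) * Φ (-(Complex.I * t)) + (cm : ℂ) * Φ (Complex.I * t) + Complex.I * ((d * t : ℝ) : ℂ))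
        = φ₁ t * Complex.exp ((κ * (Real.exp (-(t^2/2)) - 1) : ℝ) : ℂ) := by
  have hΓ : 0 < Real.Gamma (2 - α) := Real.Gamma_pos_of_pos (by linarith)
  set Γ := Real.Gamma (2 - α) with hΓd
  have hE : 0 < 7 * Real.exp 2 := by positivity
  set κ : ℝ := min (cp / Γ) (cm / Γ) / (7 * Real.exp 2) with hκd
  have hκ : 0 < κ := by positivity
  have hκE : κ * (7 * Real.exp 2) = min (cp / Γ) (cm / Γ) := div_mul_cancel₀ _ hE.ne'
  have a1 := oneSided (c := cp / Γ) h0 h2 hκ.le (hκE.trans_le (min_le_left _ _)) hΦ hΦ' hr hcont hz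
  have a2 := (oneSided (c := cm / Γ) h0 h2 hκ.le (hκE.trans_le (min_le_right _ _)) hΦ hΦ' hr hcont hz).neg
  rw [← hΓd, div_mul_cancel₀ _ hΓ.ne'] at a1 a2
  refine ⟨κ, hκ, _, (a1.mul a2).mul (IsCF.drift d), fun t => ?_⟩
  rw [← Complex.exp_add, ← Complex.exp_add, ← Complex.exp_add]
  congr 1
  have hh := gD_halves t
  rw [Complex.ofReal_mul κ, ← hh]
  simp only [Complex.ofReal_neg, mul_neg, neg_neg]
  ring

lemma log_It {s : ℝ} (hs : 0 < s) : Complex.log (Complex.I * s) = Real.log s + (Real.pi / 2) * Complex.I := by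
  rw [mul_comm, Complex.log_ofReal_mul hs Complex.I_ne_zero, Complex.log_I]

lemma log_neg_It {s : ℝ} (hs : 0 < s) : Complex.log (-(Complex.I * s)) = Real.log s - (Real.pi / 2) * Complex.I := by
  rw [show -(Complex.I * s) = (s : ℂ) * (-Complex.I) by ring, Complex.log_ofReal_mul hs (neg_ne_zero.2 Complex.I_ne_zero), Complex.log_neg_I]
  ring

lemma pow_It {s : ℝ} (hs : 0 < s) (α : ℝ) : (Complex.I * s) ^ (α : ℂ) =
    ((s ^ α : ℝ) : ℂ) * ((Real.cos (Real.pi * α / 2) : ℂ) + (Real.sin (Real.pi * α / 2) : ℂ) * Complex.I) := by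
  have hs' : (s : ℂ) ≠ 0 := by exact_mod_cast hs.ne'
  rw [Complex.cpow_def_of_ne_zero (mul_ne_zero Complex.I_ne_zero hs'), log_It hs, Real.rpow_def_of_pos hs]
  push_cast
  rw [← Complex.exp_mul_I, ← Complex.exp_add]
  congr 1; ring

lemma pow_neg_It {s : ℝ} (hs : 0 < s) (α : ℝ) : (-(Complex.I * s)) ^ (α : ℂ) =
    ((s ^ α : ℝ) : ℂ) * ((Real.cos (Real.pi * α / 2) : ℂ) - (Real.sin (Real.pi * α / 2) : ℂ) * Complex.I) := by
  have hs' : (s : ℂ) ≠ 0 := by exact_mod_cast hs.ne'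
  rw [Complex.cpow_def_of_ne_zero (neg_ne_zero.2 (mul_ne_zero Complex.I_ne_zero hs')), log_neg_It hs, Real.rpow_def_of_pos hs]
  have e : (Real.cos (Real.pi * α / 2) : ℂ) - (Real.sin (Real.pi * α / 2) : ℂ) * Complex.I
    = Complex.exp (-((Real.pi * α / 2 : ℝ) : ℂ) * Complex.I) := by
    rw [Complex.exp_mul_I, Complex.cos_neg, Complex.sin_neg]
    push_cast; ring
  rw [e]
  push_cast
  rw [← Complex.exp_add]
  congr 1; ring

lemma factor_ne {θ : Fin 4 → ℝ} (hθ : θ ∈ ThetaInt) (h1 : θ 2 ≠ 1) :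
    ∃ κ : ℝ, 0 < κ ∧ ∃ φ₁ : ℝ → ℂ, IsCF φ₁ ∧ ∀ t : ℝ,
      phiM θ t = φ₁ t * Complex.exp ((κ * (Real.exp (-(t^2/2)) - 1) : ℝ) : ℂ) := by
  obtain ⟨hσ, ⟨h0, h2⟩, hb1, hb2⟩ := hθ
  unfold phiM psiM
  simp only [if_neg h1]
  generalize θ 0 = μ at *
  generalize θ 1 = σ at *
  generalize θ 2 = α at *
  generalize θ 3 = β at *
  have hα0 : (α : ℂ) ≠ 0 := by exact_mod_cast h0.ne'
  have hα1 : (α : ℂ) - 1 ≠ 0 := by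
    rw [sub_ne_zero]; exact_mod_cast h1
  have hα1' : α - 1 ≠ 0 := sub_ne_zero.2 h1
  set co := Real.cos (Real.pi * α / 2) with hco
  set si := Real.sin (Real.pi * α / 2) with hsi
  have hpi := Real.pi_pos
  have hcs : 0 < (1 - α) * co := by
    rcases lt_or_gt_of_ne h1 with h | h
    · have : 0 < co := Real.cos_pos_of_mem_Ioo ⟨by nlinarith, by nlinarith⟩
      nlinarith
    · have : co < 0 := Real.cos_neg_of_pi_div_two_lt_of_lt (by nlinarith) (by nlinarith)
      nlinarith
  have hco0 : co ≠ 0 := fun h => by simp [h] at hcs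
  set K : ℝ := σ ^ α * (α * (1 - α)) / co with hK
  have hKpos : 0 < K := by
    have : K = σ ^ α * α * ((1 - α) * co) / co ^ 2 := by rw [hK]; field_simp
    rw [this]; positivity
  have hcocplx : (co : ℂ) ≠ 0 := by exact_mod_cast hco0
  have htan : Real.tan (Real.pi * α / 2) = si / co := Real.tan_eq_sin_div_cos _
  obtain ⟨κ, hκ, φ₁, hφ, h⟩ := twoSided (α := α) (cp := K * (1 + β) / 2) (cm := K * (1 - β) / 2)
    (μ - β * σ * (si / co)) h0 h2
    (by have : 0 < 1 + β := by linarith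
        positivity) (by have : 0 < 1 - β := by linarith
                        positivity)
    (Φ := fun z => z ^ (α : ℂ) / (α * (α - 1))) (Φ' := fun z => z ^ ((α : ℂ) - 1) / (α - 1))
    (by
      intro z hz
      have := ((Complex.hasStrictDerivAt_cpow_const (c := (α : ℂ)) (Or.inl hz : z ∈ Complex.slitPlane)).hasDerivAt).div_const ((α : ℂ) * (α - 1))
      exact this.congr_deriv (by field_simp))
    (by
      intro z hz
      have := ((Complex.hasStrictDerivAt_cpow_const (c := (α : ℂ) - 1) (Or.inl hz : z ∈ Complex.slitPlane)).hasDerivAt).div_const ((α : ℂ) - 1)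
      refine this.congr_deriv ?_
      rw [mul_div_cancel_left₀ _ hα1]
      congr 1; push_cast; ring)
    (by
      intro ε hε
      have : (ε : ℂ) ^ ((α : ℂ) - 1) / (α - 1) = ((ε ^ (α - 1) / (α - 1) : ℝ) : ℂ) := by
        push_cast [Complex.ofReal_cpow hε.le]; rfl
      rw [this, Complex.ofReal_im])
    (by
      intro z hz
      refine ContinuousAt.continuousWithinAt (ContinuousAt.div_const ?_ _)
      exact Complex.continuousAt_cpow_const_of_re_pos (Or.inl hz) (by simpa using h0))
    (by simp [Complex.zero_cpow hα0])
  refine ⟨κ, hκ, φ₁, hφ, fun t => ?_⟩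
  rw [← h t]
  congr 1
  rw [htan]
  rcases lt_trichotomy t 0 with ht | ht | ht
  · obtain ⟨s, rfl⟩ : ∃ s, t = -s := ⟨-t, by ring⟩
    have hs : 0 < s := by linarith
    rw [Real.sign_of_neg ht, show |σ * -s| = σ * s by rw [mul_neg, abs_neg, abs_of_pos (by positivity)]]
    simp only [Complex.ofReal_neg, mul_neg, neg_neg]
    rw [pow_It hs, pow_neg_It hs, ← hco, ← hsi, Real.rpow_sub (by positivity), Real.rpow_one, Real.mul_rpow hσ.le hs.le, hK]
    have e1 : ((σ ^ α : ℝ) : ℂ) ≠ 0 := by exact_mod_cast (by positivity : σ ^ α ≠ 0)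
    have e2 : ((s ^ α : ℝ) : ℂ) ≠ 0 := by exact_mod_cast (by positivity : s ^ α ≠ 0)
    push_cast
    field_simp
    ring_nf
  · subst ht
    simp [Real.zero_rpow h0.ne', Complex.zero_cpow hα0]
  · have hs := ht
    rw [Real.sign_of_pos ht, show |σ * t| = σ * t by rw [abs_of_pos (by positivity)]]
    rw [pow_It hs, pow_neg_It hs, ← hco, ← hsi, Real.rpow_sub (by positivity), Real.rpow_one, Real.mul_rpow hσ.le hs.le, hK]
    have e1 : ((σ ^ α : ℝ) : ℂ) ≠ 0 := by exact_mod_cast (by positivity : σ ^ α ≠ 0)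
    have e2 : ((t ^ α : ℝ) : ℂ) ≠ 0 := by exact_mod_cast (by positivity : t ^ α ≠ 0)
    push_cast
    field_simp
    ring_nf

lemma continuousAt_mul_log_zero : ContinuousAt (fun z : ℂ => z * Complex.log z) 0 := by
  rw [ContinuousAt, zero_mul]
  have hb : ∀ z : ℂ, ‖z * Complex.log z‖ ≤ |‖z‖ * Real.log ‖z‖| + ‖z‖ * Real.pi := by
    intro z
    rw [norm_mul, abs_mul, abs_norm, ← mul_add]
    gcongr
    refine (Complex.norm_le_abs_re_add_abs_im _).trans ?_
    rw [Complex.log_re, Complex.log_im]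
    gcongr
    exact Complex.abs_arg_le_pi z
  refine squeeze_zero_norm hb ?_
  have h1 : Continuous fun z : ℂ => |‖z‖ * Real.log ‖z‖| + ‖z‖ * Real.pi :=
    ((Real.continuous_mul_log.comp continuous_norm).abs).add (by fun_prop)
  simpa using h1.tendsto 0

lemma factor_eq {θ : Fin 4 → ℝ} (hθ : θ ∈ ThetaInt) (h1 : θ 2 = 1) :
    ∃ κ : ℝ, 0 < κ ∧ ∃ φ₁ : ℝ → ℂ, IsCF φ₁ ∧ ∀ t : ℝ,
      phiM θ t = φ₁ t * Complex.exp ((κ * (Real.exp (-(t^2/2)) - 1) : ℝ) : ℂ) := by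
  obtain ⟨hσ, -, hb1, hb2⟩ := hθ
  unfold phiM psiM
  simp only [if_pos h1]
  generalize θ 0 = μ at *
  generalize θ 1 = σ at *
  generalize θ 3 = β at *
  have hpi := Real.pi_pos
  have hpic : (Real.pi : ℂ) ≠ 0 := by exact_mod_cast hpi.ne'
  obtain ⟨κ, hκ, φ₁, hφ, h⟩ := twoSided (α := 1) (cp := σ / Real.pi * (1 + β)) (cm := σ / Real.pi * (1 - β))
    (μ - (2 * β / Real.pi) * σ * Real.log σ) one_pos one_lt_two
    (by have : 0 < 1 + β := by linarith
        positivity) (by have : 0 < 1 - β := by linarith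
                        positivity)
    (Φ := fun z => z * Complex.log z) (Φ' := fun z => Complex.log z + 1)
    (by
      intro z hz
      have hs : z ∈ Complex.slitPlane := Or.inl hz
      refine ((hasDerivAt_id z).fun_mul (Complex.hasDerivAt_log hs)).congr_deriv ?_
      have := Complex.slitPlane_ne_zero hs
      simp only [id]; field_simp)
    (by
      intro z hz
      have hs : z ∈ Complex.slitPlane := Or.inl hz
      refine ((Complex.hasDerivAt_log hs).add_const 1).congr_deriv ?_
      rw [show ((1 - 2 : ℝ) : ℂ) = -1 by norm_num, Complex.cpow_neg_one])
    (by
      intro ε hε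
      simp [← Complex.ofReal_log hε.le])
    (by
      intro z hz
      apply ContinuousAt.continuousWithinAt
      by_cases hz0 : z = 0
      · rw [hz0]; exact continuousAt_mul_log_zero
      · have hs : z ∈ Complex.slitPlane := by
          by_cases him : z.im = 0
          · left
            refine lt_of_le_of_ne hz fun h => hz0 ?_
            exact Complex.ext h.symm him
          · exact Or.inr him
        exact continuousAt_id.mul (Complex.hasDerivAt_log hs).continuousAt)
    (by simp)
  refine ⟨κ, hκ, φ₁, hφ, fun t => ?_⟩
  rw [← h t]
  congr 1
  rcases lt_trichotomy t 0 with ht | ht | ht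
  · obtain ⟨s, rfl⟩ : ∃ s, t = -s := ⟨-t, by ring⟩
    have hs : 0 < s := by linarith
    rw [show |σ * -s| = σ * s by rw [mul_neg, abs_neg, abs_of_pos (by positivity)]]
    simp only [Complex.ofReal_neg, mul_neg, neg_neg]
    rw [log_It hs, log_neg_It hs, Real.log_mul hσ.ne' hs.ne']
    push_cast
    field_simp
    ring_nf
    simp only [Complex.I_sq]
    ring
  · subst ht
    simp
  · have hs := ht
    rw [show |σ * t| = σ * t by rw [abs_of_pos (by positivity)]]
    rw [log_It hs, log_neg_It hs, Real.log_mul hσ.ne' hs.ne']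
    push_cast
    field_simp
    ring_nf
    simp only [Complex.I_sq]
    ring

lemma norm_phiM {θ : Fin 4 → ℝ} (t : ℝ) : ‖phiM θ t‖ = Real.exp (-(|θ 1 * t| ^ (θ 2))) := by
  unfold phiM psiM
  rw [Complex.norm_exp]
  congr 1
  split_ifs with h
  · simp [h, -mul_eq_mul_left_iff]
  · rw [Complex.add_re, Complex.re_ofReal_mul, Complex.add_re, Complex.re_mul_ofReal, Complex.re_mul_ofReal]
    simp

lemma measurable_phiM (θ : Fin 4 → ℝ) : Measurable (phiM θ) := by
  unfold phiM psiM
  have hs : Measurable Real.sign := by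
    unfold Real.sign
    exact Measurable.ite (measurableSet_lt measurable_id measurable_const) measurable_const
      (Measurable.ite (measurableSet_lt measurable_const measurable_id) measurable_const measurable_const)
  split_ifs with h
  · fun_prop
  · fun_prop

lemma integrable_phiM {θ : Fin 4 → ℝ} (hθ : θ ∈ ThetaInt) : Integrable (phiM θ) := by
  obtain ⟨hσ, ⟨h0, h2⟩, hb1, hb2⟩ := hθ
  have hpos : IntegrableOn (fun t : ℝ => Real.exp (-(θ 1 ^ θ 2 * |t| ^ θ 2))) (Set.Ioi 0) := by
    have := integrableOn_rpow_mul_exp_neg_mul_rpow (p := θ 2) (s := 0) (b := θ 1 ^ θ 2) (by norm_num) h0 (by positivity)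
    refine this.congr_fun (fun x hx => ?_) measurableSet_Ioi
    have hx : 0 < x := hx
    simp [abs_of_pos hx]
  have hall : Integrable (fun t : ℝ => Real.exp (-(θ 1 ^ θ 2 * |t| ^ θ 2))) := by
    have hneg : IntegrableOn (fun t : ℝ => Real.exp (-(θ 1 ^ θ 2 * |t| ^ θ 2))) (Set.Iic 0) := by
      have := (integrableOn_Iic_iff_integrableOn_Iio (μ := volume) (f := fun t : ℝ => Real.exp (-(θ 1 ^ θ 2 * |t| ^ θ 2))) (b := 0)).2 ?_
      · exact this
      · have h := hpos
        rw [← (Measure.measurePreserving_neg (volume : Measure ℝ)).integrableOn_comp_preimage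
          (Homeomorph.neg ℝ).measurableEmbedding] at h
        refine (h.congr_fun (fun x _ => ?_) (measurableSet_Ioi.preimage measurable_neg)).mono_set ?_
        · simp
        · intro x hx
          simpa using hx
    rw [← integrableOn_univ, ← Set.Iic_union_Ioi (a := (0:ℝ))]
    exact hneg.union hpos
  refine hall.mono' (measurable_phiM θ).aestronglyMeasurable (Filter.Eventually.of_forall fun t => ?_)
  rw [norm_phiM, abs_mul, abs_of_pos hσ, Real.mul_rpow hσ.le (abs_nonneg t)]


/-- For every `θ` in the interior of the parameter space and every real `x`,
the (M₀) stable density is strictly positive. -/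
theorem stable_density_pos :
    ∀ θ ∈ ThetaInt, ∀ x : ℝ, 0 < fM θ x := by
  intro θ hθ x
  have hf : ∃ κ : ℝ, 0 < κ ∧ ∃ φ₁ : ℝ → ℂ, IsCF φ₁ ∧ ∀ t : ℝ,
      phiM θ t = φ₁ t * Complex.exp ((κ * (Real.exp (-(t^2/2)) - 1) : ℝ) : ℂ) := by
    by_cases h : θ 2 = 1
    · exact factor_eq hθ h
    · exact factor_ne hθ h
  obtain ⟨κ, hκ, φ₁, h1, hφ⟩ := hf
  unfold fM
  have := pos_of_factor h1 hκ hφ (integrable_phiM hθ) x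
  have := Real.pi_pos
  positivity
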